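/- Let D, d, d_e be natural numbers with 1 ≤ d_e, d_e ≤ d and d_e < D, let U be a D×d_e real matrix and V a D×(D−d_e) real matrix with UᵀU = I, VᵀV = I and UᵀV = 0, let p, x* ∈ ℝ^D with z* := Uᵀ(x* − p) ≠ 0, and let μ be the Gaussian matrix measure on D×d real matrices. Set m = D − d_e and n = d − d_e + 1, and for a matrix A set B = Uᵀ A, y₂*(A) = Bᵀ(B Bᵀ)⁻¹ z*, and w(A) = Vᵀ(A y₂*(A)) ∈ ℝ^m. Then the pushforward of μ under the map A ↦ (n / (m · ‖z*‖²)) · ‖w(A)‖² equals the F-distribution with degrees of freedom (m, n), realized as the pushforward of the product of the standard Gaussian measures on ℝ^m and ℝ^n under the map (x, y) ↦ (‖x‖²/m) / (‖y‖²/n). -/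

import Mathlib

/-!
Rotate the target vector: choose an orthogonal `R` with `R z* = ‖z*‖ e₀`. The stacked matrix with
blocks `R Uᵀ` and `Vᵀ` has orthonormal rows, so `B = R Uᵀ A` and `C = Vᵀ A` are independent Gaussian
matrices (`map_blocks`), and `w(A) = C y`, where `y` is the minimum-norm solution of `B y = ‖z*‖ e₀`
(`minNormSol_rotate`).

Given `B`, the vector `C y` is `‖y‖ g` with `g` standard Gaussian in `ℝ^m` (`map_mulVec_gaussMat`).
Let `b` be the first row of `B`. Almost surely the rows of `B` are linearly independent, and then
`‖y‖² = ‖z*‖² / ‖N b‖²`, where the rows of `N` are an orthonormal basis of the complement of the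
span of the other rows (`minNormSol_cons`). That complement has dimension `d - (d_e - 1) = n`, so given
the other rows, `N b` is standard Gaussian in `ℝ^n` (`map_frame`). The scaled squared norm is therefore
`(‖g‖² / m) / (‖N b‖² / n)` with `g` and `N b` independent. The conditioning is Fubini's theorem for
test functions (`core_map`): the integral over `b` does not depend on the other rows, so no measurable
choice of `N` is required.
-/

open Matrix MeasureTheory ProbabilityTheory

/-- The Gaussian matrix measure on `D × d` real matrices: all entries i.i.d. `N(0,1)`. -/
noncomputable def gaussMatrix (D d : ℕ) : Measure (Fin D → Fin d → ℝ) :=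
  Measure.pi fun _ => Measure.pi fun _ => gaussianReal 0 1

/-- The standard Gaussian measure on `ℝ^k`: `k` i.i.d. `N(0,1)` coordinates. -/
noncomputable def stdGauss (k : ℕ) : Measure (Fin k → ℝ) :=
  Measure.pi fun _ => gaussianReal 0 1

/-- The Euclidean norm on `ℝ^k`. -/
noncomputable def euclNorm {k : ℕ} (y : Fin k → ℝ) : ℝ := Real.sqrt (∑ i, y i ^ 2)

/-! ### Rotation invariance of Gaussian vectors and matrices -/

theorem euclNorm_sq {k : ℕ} (y : Fin k → ℝ) : euclNorm y ^ 2 = y ⬝ᵥ y := by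
  rw [euclNorm, Real.sq_sqrt (Finset.sum_nonneg fun i _ => sq_nonneg _)]
  simp [dotProduct, sq]

theorem measurable_mulVec {ι κ : Type*} [Fintype ι] [Fintype κ] (Q : Matrix κ ι ℝ) :
    Measurable (fun x : ι → ℝ => Q *ᵥ x) :=
  (Continuous.matrix_mulVec continuous_const continuous_id).measurable

/-- A coisometry `Q` (orthonormal rows) sends standard Gaussian vectors to standard Gaussian
vectors: the characteristic function at `t` only depends on `‖Qᵀ t‖ = ‖t‖`. -/
theorem map_mulVec_pi_gauss {ι κ : Type*} [Fintype ι] [Fintype κ] [DecidableEq κ]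
    (Q : Matrix κ ι ℝ) (hQ : Q * Qᵀ = 1) :
    (Measure.pi fun _ : ι => gaussianReal 0 1).map (fun x => Q *ᵥ x) =
      Measure.pi fun _ : κ => gaussianReal 0 1 := by
  have hmeas := measurable_mulVec Q
  apply (MeasurableEquiv.toLp 2 (κ → ℝ)).map_measurableEquiv_injective
  rw [MeasurableEquiv.coe_toLp, map_pi_eq_stdGaussian]
  apply Measure.ext_of_charFun (E := EuclideanSpace ℝ κ)
  ext t
  have key : charFun (((Measure.pi fun _ : ι => gaussianReal 0 1).map (fun x => Q *ᵥ x)).map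
      (WithLp.toLp 2)) t =
      charFun (stdGaussian (EuclideanSpace ℝ ι)) (WithLp.toLp 2 (Qᵀ *ᵥ t.ofLp)) := by
    rw [← map_pi_eq_stdGaussian, charFun_apply, charFun_apply,
      Measure.map_map (by fun_prop) hmeas,
      integral_map (by fun_prop) (by fun_prop), integral_map (by fun_prop) (by fun_prop)]
    congr 1 with x
    simp only [Function.comp, EuclideanSpace.inner_eq_star_dotProduct, star_trivial]
    rw [Matrix.dotProduct_mulVec, Matrix.mulVec_transpose]
  have hnorm : ‖(WithLp.toLp 2 (Qᵀ *ᵥ t.ofLp) : EuclideanSpace ℝ ι)‖ ^ 2 = ‖t‖ ^ 2 := by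
    rw [← real_inner_self_eq_norm_sq, ← real_inner_self_eq_norm_sq]
    simp only [EuclideanSpace.inner_eq_star_dotProduct, star_trivial]
    rw [Matrix.dotProduct_mulVec, Matrix.vecMul_transpose, Matrix.mulVec_mulVec, hQ,
      Matrix.one_mulVec]
  rw [key, charFun_stdGaussian, charFun_stdGaussian]
  norm_cast
  rw [hnorm]

/-- The Gaussian measure on `ι × κ` matrices, for arbitrary finite index types. On `Fin D`, `Fin d`
it is definitionally `gaussMatrix D d`; other index types are needed for block matrices. -/
noncomputable def gaussMat (ι κ : Type*) [Fintype ι] [Fintype κ] : Measure (ι → κ → ℝ) :=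
  Measure.pi fun _ => Measure.pi fun _ => gaussianReal 0 1

instance (ι κ : Type*) [Fintype ι] [Fintype κ] : IsProbabilityMeasure (gaussMat ι κ) := by
  unfold gaussMat; infer_instance

instance (k : ℕ) : IsProbabilityMeasure (stdGauss k) := by
  unfold stdGauss; infer_instance

theorem gaussMat_eq_map_curry (ι κ : Type*) [Fintype ι] [Fintype κ] :
    gaussMat ι κ = (Measure.pi fun _ : ι × κ => gaussianReal 0 1).map
      (MeasurableEquiv.curry ι κ ℝ) := by
  have := Measure.infinitePi_map_curry (fun (_ : ι) (_ : κ) => gaussianReal 0 1)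
  simp only [Measure.infinitePi_eq_pi] at this
  exact this.symm

/-- Left multiplication by a coisometry preserves the Gaussian matrix law. It is the coisometry
`Q ⊗ 1` on vectorised matrices. -/
theorem map_mul_gaussMat {ι ι' κ : Type*} [Fintype ι] [Fintype ι'] [DecidableEq ι'] [Fintype κ]
    [DecidableEq κ] (Q : Matrix ι' ι ℝ) (hQ : Q * Qᵀ = 1) :
    (gaussMat ι κ).map (fun A i j => (Q * Matrix.of A) i j) = gaussMat ι' κ := by
  have hmeas : Measurable (fun (A : ι → κ → ℝ) i j => (Q * Matrix.of A) i j) := by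
    simp only [Matrix.mul_apply, Matrix.of_apply]
    fun_prop
  have hK : (Matrix.kroneckerMap (· * ·) Q (1 : Matrix κ κ ℝ)) *
      (Matrix.kroneckerMap (· * ·) Q (1 : Matrix κ κ ℝ))ᵀ = 1 := by
    rw [← Matrix.kroneckerMap_transpose, ← Matrix.mul_kronecker_mul, hQ]
    simp
  rw [gaussMat_eq_map_curry, gaussMat_eq_map_curry, ← map_mulVec_pi_gauss _ hK,
    Measure.map_map hmeas (by fun_prop), Measure.map_map (by fun_prop) (measurable_mulVec _)]
  congr 1
  ext x i j
  simp [Matrix.mul_apply, Matrix.mulVec, dotProduct, Fintype.sum_prod_type, Matrix.one_apply]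

/-- For a fixed `y ≠ 0` and a Gaussian matrix `C`, the vector `C y` is distributed as `‖y‖ g` with
`g` standard Gaussian. -/
theorem map_mulVec_gaussMat {m d : ℕ} (y : Fin d → ℝ) (hy : y ≠ 0) :
    (gaussMat (Fin m) (Fin d)).map (fun C => Matrix.of C *ᵥ y) =
      (stdGauss m).map (fun g => euclNorm y • g) := by
  have hpos : 0 < y ⬝ᵥ y := by simpa using Matrix.dotProduct_star_self_pos_iff.2 hy
  have hr : euclNorm y ≠ 0 := by
    intro h
    rw [← euclNorm_sq, h] at hpos
    simp at hpos
  set r := euclNorm y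
  have hr2 : r * r = y ⬝ᵥ y := by rw [← sq, euclNorm_sq]
  set Q : Matrix (Fin m) (Fin m × Fin d) ℝ :=
    Matrix.of fun i ab => if i = ab.1 then r⁻¹ * y ab.2 else 0 with hQdef
  have hQ : Q * Qᵀ = 1 := by
    ext i j
    simp only [hQdef, Matrix.mul_apply, Matrix.transpose_apply, Fintype.sum_prod_type,
      Matrix.one_apply, Matrix.of_apply]
    by_cases hij : i = j
    · subst hij
      simp only [if_true]
      rw [Finset.sum_eq_single i (by intro b _ hb; simp [hb.symm]) (by simp)]
      have : ∑ b, r⁻¹ * y b * (r⁻¹ * y b) = (r * r)⁻¹ * (y ⬝ᵥ y) := by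
        rw [dotProduct, Finset.mul_sum]
        refine Finset.sum_congr rfl fun b _ => ?_
        field_simp
      simp only [if_true]
      rw [this, hr2, inv_mul_cancel₀ hpos.ne']
    · rw [if_neg hij]
      refine Finset.sum_eq_zero fun a _ => Finset.sum_eq_zero fun b _ => ?_
      by_cases h : i = a
      · subst h; simp [Ne.symm hij]
      · simp [h]
  have hm1 : Measurable (fun C : Fin m → Fin d → ℝ => Matrix.of C *ᵥ y) :=
    (show Continuous (fun C : Fin m → Fin d → ℝ => Matrix.of C *ᵥ y) from
      Continuous.matrix_mulVec continuous_id continuous_const).measurable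
  rw [stdGauss, ← map_mulVec_pi_gauss Q hQ, gaussMat_eq_map_curry,
    Measure.map_map hm1 (by fun_prop), Measure.map_map (by fun_prop) (measurable_mulVec _)]
  congr 1
  ext x i
  simp only [Function.comp, Matrix.mulVec, dotProduct, hQdef, Fintype.sum_prod_type, Pi.smul_apply,
    smul_eq_mul, Matrix.of_apply]
  rw [Finset.sum_eq_single i (by intro b _ hb; simp [hb.symm]) (by simp), Finset.mul_sum]
  refine Finset.sum_congr rfl fun b _ => ?_
  simp
  field_simp

/-! ### Orthogonal complements and almost sure linear independence -/

/-- The rows of `N` are an orthonormal basis of the orthogonal complement of the span of `v`; in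
particular `N` is isometric on that complement. -/
theorem exists_compl_frame {k d n : ℕ} (hkn : k + n = d) (v : Fin k → Fin d → ℝ)
    (hv : LinearIndependent ℝ v) :
    ∃ N : Matrix (Fin n) (Fin d) ℝ, N * Nᵀ = 1 ∧ (∀ i, N *ᵥ v i = 0) ∧
      ∀ y : Fin d → ℝ, (∀ i, v i ⬝ᵥ y = 0) → y ⬝ᵥ y = (N *ᵥ y) ⬝ᵥ (N *ᵥ y) := by
  let e := (WithLp.linearEquiv 2 ℝ (Fin d → ℝ)).symm
  let u : Fin k → EuclideanSpace ℝ (Fin d) := fun i => e (v i)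
  have hu : LinearIndependent ℝ u := hv.map' e.toLinearMap e.ker
  let W := Submodule.span ℝ (Set.range u)
  have hW : Module.finrank ℝ W = k := by simpa using finrank_span_eq_card hu
  have hWo : Module.finrank ℝ Wᗮ = n := by
    have := W.finrank_add_finrank_orthogonal
    rw [hW, finrank_euclideanSpace_fin] at this
    omega
  let b : OrthonormalBasis (Fin n) ℝ Wᗮ := (stdOrthonormalBasis ℝ Wᗮ).reindex (finCongr hWo)
  let N : Matrix (Fin n) (Fin d) ℝ := fun i => (b i : EuclideanSpace ℝ (Fin d)).ofLp
  have hN : ∀ i (x : Fin d → ℝ), (N *ᵥ x) i =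
      inner ℝ (b i : EuclideanSpace ℝ (Fin d)) (e x) := by
    intro i x
    rw [EuclideanSpace.inner_eq_star_dotProduct, star_trivial, dotProduct_comm]
    rfl
  refine ⟨N, ?_, ?_, ?_⟩
  · ext i j
    have := orthonormal_iff_ite.1 b.orthonormal i j
    rw [Submodule.coe_inner, EuclideanSpace.inner_eq_star_dotProduct, star_trivial,
      dotProduct_comm] at this
    rw [Matrix.one_apply, ← this]
    rfl
  · intro i
    ext j
    rw [hN]
    exact (Submodule.mem_orthogonal' W _).1 (b j).2 _ (Submodule.subset_span ⟨i, rfl⟩)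
  · intro y hy
    have hyW : e y ∈ Wᗮ := by
      rw [Submodule.mem_orthogonal]
      intro w hw
      induction hw using Submodule.span_induction with
      | mem x hx =>
        obtain ⟨i, rfl⟩ := hx
        rw [EuclideanSpace.inner_eq_star_dotProduct, star_trivial, dotProduct_comm]
        exact hy i
      | zero => simp
      | add a b _ _ ha hb => rw [inner_add_left, ha, hb, add_zero]
      | smul c a _ ha => rw [inner_smul_left, ha, mul_zero]
    have h1 := b.sum_sq_inner_right ⟨e y, hyW⟩
    have h2 : y ⬝ᵥ y = ‖e y‖ ^ 2 := by
      rw [← real_inner_self_eq_norm_sq, EuclideanSpace.inner_eq_star_dotProduct, star_trivial]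
      rfl
    rw [h2, show ‖e y‖ = ‖(⟨e y, hyW⟩ : Wᗮ)‖ from rfl, ← h1, dotProduct]
    refine Finset.sum_congr rfl fun i _ => ?_
    rw [hN, sq, Submodule.coe_inner]

theorem map_frame {d n : ℕ} (N : Matrix (Fin n) (Fin d) ℝ) (hN : N * Nᵀ = 1) :
    (stdGauss d).map (fun x => N *ᵥ x) = stdGauss n := map_mulVec_pi_gauss N hN

theorem ae_frame_ne_zero {d n : ℕ} (hn : 0 < n) (N : Matrix (Fin n) (Fin d) ℝ)
    (hN : N * Nᵀ = 1) : ∀ᵐ x ∂stdGauss d, N *ᵥ x ≠ 0 := by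
  have : Nonempty (Fin n) := ⟨⟨0, hn⟩⟩
  have : NullSingletonClass (gaussianReal 0 1) :=
    nullSingletonClass_gaussianReal one_ne_zero
  have h0 : ∀ᵐ h ∂stdGauss n, h ≠ 0 := by
    rw [ae_iff]
    simp only [ne_eq, not_not, stdGauss]
    have := Measure.pi_nullSingletonClass (μ := fun _ : Fin n => gaussianReal 0 1) ⟨0, hn⟩
    exact measure_singleton _
  rw [← map_frame N hN] at h0
  exact ae_of_ae_map (measurable_mulVec N).aemeasurable h0

theorem ae_linearIndependent_cons {k d : ℕ} (hk : k < d) (v : Fin k → Fin d → ℝ)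
    (hv : LinearIndependent ℝ v) :
    ∀ᵐ x ∂stdGauss d, LinearIndependent ℝ (Fin.cons x v : Fin (k + 1) → Fin d → ℝ) := by
  obtain ⟨N, hN, hNv, -⟩ := exists_compl_frame (n := d - k) (by omega) v hv
  filter_upwards [ae_frame_ne_zero (by omega) N hN] with x hx
  refine linearIndependent_finCons.2 ⟨hv, fun hmem => hx ?_⟩
  have hle : Submodule.span ℝ (Set.range v) ≤ LinearMap.ker N.mulVecLin := by
    rw [Submodule.span_le]
    rintro _ ⟨i, rfl⟩
    simpa using hNv i
  simpa using hle hmem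

theorem gaussMat_succ (k d : ℕ) : (gaussMat (Fin (k + 1)) (Fin d)) =
    ((stdGauss d).prod (gaussMat (Fin k) (Fin d))).map
      (fun q => (Fin.cons q.1 q.2 : Fin (k + 1) → Fin d → ℝ)) := by
  have h := (measurePreserving_piFinSuccAbove
    (fun _ : Fin (k + 1) => stdGauss d) 0).symm
  have h2 := h.map_eq
  rw [gaussMat]
  refine h2.symm.trans ?_
  congr 1
  ext q i j
  simp [MeasurableEquiv.piFinSuccAbove, Fin.insertNthEquiv]

theorem measurable_cons (k d : ℕ) : Measurable (fun q : (Fin d → ℝ) × (Fin k → Fin d → ℝ) =>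
    (Fin.cons q.1 q.2 : Fin (k + 1) → Fin d → ℝ)) := by
  refine measurable_pi_lambda _ fun i => ?_
  refine Fin.cases ?_ (fun j => ?_) i
  · simpa using measurable_fst
  · simp only [Fin.cons_succ]
    fun_prop

/-- At most `d` independent Gaussian vectors of `ℝ^d` are almost surely linearly independent: each
new vector a.s. avoids the span of the previous ones. -/
theorem ae_linearIndependent {k d : ℕ} (hk : k ≤ d) :
    ∀ᵐ v ∂gaussMat (Fin k) (Fin d), LinearIndependent ℝ v := by
  induction k with
  | zero => exact ae_of_all _ fun v => linearIndependent_empty_type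
  | succ k ih =>
    have hms : MeasurableSet {v : Fin (k + 1) → Fin d → ℝ | LinearIndependent ℝ v} :=
      isOpen_setOfPred_linearIndependent.measurableSet
    have hms' : MeasurableSet {q : (Fin d → ℝ) × (Fin k → Fin d → ℝ) |
        LinearIndependent ℝ (Fin.cons q.1 q.2 : Fin (k + 1) → Fin d → ℝ)} :=
      measurable_cons k d hms
    rw [gaussMat_succ, ae_map_iff (measurable_cons k d).aemeasurable hms,
      ← Measure.prod_swap, ae_map_iff measurable_swap.aemeasurable hms']
    refine (Measure.ae_prod_iff_ae_ae (measurable_swap hms')).2 ?_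
    filter_upwards [ih (by omega)] with v hv
    exact ae_linearIndependent_cons (by omega) v hv

/-! ### The minimum-norm solution -/

/-- The minimum-norm solution `Bᵀ (B Bᵀ)⁻¹ z` of `B y = z`, with Mathlib's convention for the inverse
when `B Bᵀ` is singular. -/
noncomputable def minNormSol {k d : ℕ} (z : Fin k → ℝ) (B : Matrix (Fin k) (Fin d) ℝ) :
    Fin d → ℝ := Bᵀ *ᵥ ((B * Bᵀ)⁻¹ *ᵥ z)

theorem measurable_minNormSol {k d : ℕ} (z : Fin k → ℝ) :
    Measurable (fun B : Fin k → Fin d → ℝ => minNormSol z (Matrix.of B)) := by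
  have hG : Continuous (fun B : Fin k → Fin d → ℝ => Matrix.of B * (Matrix.of B)ᵀ) :=
    Continuous.matrix_mul continuous_id (Continuous.matrix_transpose continuous_id)
  have hinv : ∀ i j, Measurable (fun B : Fin k → Fin d → ℝ =>
      (Matrix.of B * (Matrix.of B)ᵀ)⁻¹ i j) := by
    intro i j
    simp only [Matrix.inv_def, Matrix.smul_apply, smul_eq_mul, Ring.inverse_eq_inv']
    exact hG.matrix_det.measurable.inv.mul (hG.matrix_adjugate.matrix_elem i j).measurable
  refine measurable_pi_lambda _ fun j => ?_
  change Measurable (fun B : Fin k → Fin d → ℝ =>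
    ∑ i, B i j * ∑ i', (Matrix.of B * (Matrix.of B)ᵀ)⁻¹ i i' * z i')
  exact Finset.measurable_sum _ fun i _ => Measurable.mul (by fun_prop)
    (Finset.measurable_sum _ fun i' _ => (hinv i i').mul_const _)

theorem mulVec_minNormSol {k d : ℕ} (z : Fin k → ℝ) (B : Matrix (Fin k) (Fin d) ℝ)
    (hB : LinearIndependent ℝ (fun i => B i)) : B *ᵥ minNormSol z B = z := by
  have hpd : (B * Bᵀ).PosDef := by
    simpa using Matrix.PosDef.mul_conjTranspose_self B (Matrix.vecMul_injective_iff.2 hB)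
  rw [minNormSol, Matrix.mulVec_mulVec, Matrix.mulVec_mulVec,
    Matrix.mul_nonsing_inv _ hpd.det_pos.ne'.isUnit, Matrix.one_mulVec]

/-- The geometric heart of the matter. The minimum-norm `y` with `b ⬝ y = r` and `y ⟂ v i` for all
`i` is proportional to the component of `b` orthogonal to the `v i`, whose length is `‖N b‖`;
hence `‖y‖ = |r| / ‖N b‖`. -/
theorem minNormSol_cons {k d n : ℕ} (b : Fin d → ℝ) (v : Fin k → Fin d → ℝ)
    (hli : LinearIndependent ℝ (Fin.cons b v : Fin (k + 1) → Fin d → ℝ))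
    (N : Matrix (Fin n) (Fin d) ℝ) (hNv : ∀ i, N *ᵥ v i = 0)
    (hNy : ∀ y : Fin d → ℝ, (∀ i, v i ⬝ᵥ y = 0) → y ⬝ᵥ y = (N *ᵥ y) ⬝ᵥ (N *ᵥ y))
    (r : ℝ) (hr : r ≠ 0) :
    minNormSol (Pi.single 0 r) (Matrix.of (Fin.cons b v : Fin (k + 1) → Fin d → ℝ)) ≠ 0 ∧
    euclNorm (minNormSol (Pi.single 0 r)
      (Matrix.of (Fin.cons b v : Fin (k + 1) → Fin d → ℝ))) ^ 2 =
      r ^ 2 / euclNorm (N *ᵥ b) ^ 2 := by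
  set B : Matrix (Fin (k + 1)) (Fin d) ℝ := Matrix.of (Fin.cons b v) with hBdef
  set y := minNormSol (Pi.single 0 r) B with hy
  have hBy : B *ᵥ y = Pi.single 0 r := mulVec_minNormSol _ B hli
  have hby : b ⬝ᵥ y = r := by simpa [hBdef, Matrix.mulVec] using congrFun hBy 0
  have hvy : ∀ i, v i ⬝ᵥ y = 0 := fun i => by
    simpa [hBdef, Matrix.mulVec] using congrFun hBy i.succ
  have hy0 : y ≠ 0 := by
    intro h
    rw [h, dotProduct_zero] at hby
    exact hr hby.symm
  set c := (B * Bᵀ)⁻¹ *ᵥ Pi.single 0 r with hc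
  have hyc : y = Bᵀ *ᵥ c := rfl
  have hNyc : N *ᵥ y = c 0 • (N *ᵥ b) := by
    have : y = c 0 • b + ∑ i, c (Fin.succ i) • v i := by
      ext j
      rw [hyc]
      simp [Matrix.mulVec, dotProduct, Fin.sum_univ_succ, hBdef, mul_comm]
    rw [this, Matrix.mulVec_add, Matrix.mulVec_smul, ← Matrix.mulVecLin_apply N (∑ i, _),
      map_sum]
    simp [hNv]
  -- `y = Bᵀ c`, so both `y ⬝ y = c ⬝ B y` and `‖N y‖²` are expressed through `c 0`.
  have hyy : y ⬝ᵥ y = c 0 * r := by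
    conv_lhs => lhs; rw [hyc]
    rw [Matrix.mulVec_transpose, ← Matrix.dotProduct_mulVec, hBy]
    simp
  have hyy' := hNy y hvy
  rw [hNyc, smul_dotProduct, dotProduct_smul, smul_eq_mul, smul_eq_mul, hyy] at hyy'
  have hpos : 0 < y ⬝ᵥ y := by simpa using Matrix.dotProduct_star_self_pos_iff.2 hy0
  rw [hyy] at hpos
  have hc0 : c 0 ≠ 0 := left_ne_zero_of_mul hpos.ne'
  have hrs : r = c 0 * ((N *ᵥ b) ⬝ᵥ (N *ᵥ b)) := mul_left_cancel₀ hc0 hyy'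
  refine ⟨hy0, ?_⟩
  rw [euclNorm_sq, euclNorm_sq, hyy, eq_div_iff (right_ne_zero_of_mul (hrs ▸ hr)), sq]
  nth_rw 3 [hrs]
  ring

theorem measurable_euclNorm_sq (j : ℕ) : Measurable (fun y : Fin j → ℝ => euclNorm y ^ 2) := by
  simp only [euclNorm_sq, dotProduct]
  fun_prop

theorem measurable_core {k d m : ℕ} (a r : ℝ) :
    Measurable (fun q : (Fin (k + 1) → Fin d → ℝ) × (Fin m → Fin d → ℝ) =>
      a * euclNorm (Matrix.of q.2 *ᵥ minNormSol (Pi.single 0 r) (Matrix.of q.1)) ^ 2) := by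
  have hy : Measurable (fun q : (Fin (k + 1) → Fin d → ℝ) × (Fin m → Fin d → ℝ) =>
      minNormSol (Pi.single 0 r) (Matrix.of q.1)) :=
    (measurable_minNormSol _).comp measurable_fst
  refine Measurable.const_mul ((measurable_euclNorm_sq m).comp
    (measurable_pi_lambda _ fun i => ?_)) _
  change Measurable (fun q : (Fin (k + 1) → Fin d → ℝ) × (Fin m → Fin d → ℝ) =>
    ∑ j, q.2 i j * minNormSol (Pi.single 0 r) (Matrix.of q.1) j)
  exact Finset.measurable_sum _ fun j _ =>
    Measurable.mul (by fun_prop) ((measurable_pi_apply j).comp hy)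

/-! ### The law of the scaled squared norm -/

/-- The `F`-law after rotation, when `z = r e₀` and the blocks `B` and `C` of the Gaussian matrix are
independent. Given `B`, `‖C y‖²` is `‖y‖²` times a `χ²` variable with `m` degrees of freedom; given
the rows of `B` other than the first, `r² / ‖y‖²` is `χ²` with `n` degrees of freedom. -/
theorem core_map {k d m n : ℕ} (hkn : k + n = d) (hn : 0 < n) (r : ℝ) (hr : r ≠ 0) :
    ((gaussMat (Fin (k + 1)) (Fin d)).prod (gaussMat (Fin m) (Fin d))).map
      (fun q => ((n : ℝ) / ((m : ℝ) * r ^ 2)) *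
        euclNorm (Matrix.of q.2 *ᵥ minNormSol (Pi.single 0 r) (Matrix.of q.1)) ^ 2) =
      ((stdGauss m).prod (stdGauss n)).map
        (fun xy : (Fin m → ℝ) × (Fin n → ℝ) =>
          (euclNorm xy.1 ^ 2 / (m : ℝ)) / (euclNorm xy.2 ^ 2 / (n : ℝ))) := by
  have hS := measurable_core (k := k) (d := d) (m := m) ((n : ℝ) / ((m : ℝ) * r ^ 2)) r
  have hT : Measurable (fun xy : (Fin m → ℝ) × (Fin n → ℝ) =>
      (euclNorm xy.1 ^ 2 / (m : ℝ)) / (euclNorm xy.2 ^ 2 / (n : ℝ))) :=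
    (((measurable_euclNorm_sq m).comp measurable_fst).div_const _).div
      (((measurable_euclNorm_sq n).comp measurable_snd).div_const _)
  refine Measure.ext_of_lintegral _ fun f hf => ?_
  -- `H t` is the expectation over the numerator when the `χ²` variable in the denominator is `t`.
  set H : ℝ → ENNReal := fun t =>
    ∫⁻ g, f ((euclNorm g ^ 2 / (m : ℝ)) / (t / (n : ℝ))) ∂stdGauss m with hHdef
  have hH : Measurable H := by
    refine Measurable.lintegral_prod_right' (ν := stdGauss m)
      (f := fun p : ℝ × (Fin m → ℝ) => f ((euclNorm p.2 ^ 2 / (m : ℝ)) / (p.1 / (n : ℝ)))) ?_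
    exact hf.comp ((((measurable_euclNorm_sq m).comp measurable_snd).div_const _).div
      (measurable_fst.div_const _))
  have hfS := hf.comp hS
  have hG := hfS.lintegral_prod_right' (ν := gaussMat (Fin m) (Fin d))
  rw [lintegral_map hf hS, lintegral_map hf hT]
  refine Eq.trans ?_ (lintegral_prod_symm _ (hf.comp hT).aemeasurable).symm
  change ∫⁻ q, _ ∂_ = ∫⁻ h, H (euclNorm h ^ 2) ∂stdGauss n
  refine (lintegral_prod _ hfS.aemeasurable).trans ?_
  rw [gaussMat_succ, lintegral_map hG (measurable_cons k d)]
  refine (lintegral_prod_symm _ (hG.comp (measurable_cons k d)).aemeasurable).trans ?_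
  -- Condition on all rows of `B` except the first: the inner integral is a.s. the same constant.
  have hae : ∀ᵐ v ∂gaussMat (Fin k) (Fin d),
      ∫⁻ b, ∫⁻ C, f (((n : ℝ) / ((m : ℝ) * r ^ 2)) *
        euclNorm (Matrix.of C *ᵥ minNormSol (Pi.single 0 r)
          (Matrix.of (Fin.cons b v : Fin (k + 1) → Fin d → ℝ))) ^ 2)
        ∂gaussMat (Fin m) (Fin d) ∂stdGauss d =
      ∫⁻ h, H (euclNorm h ^ 2) ∂stdGauss n := by
    filter_upwards [ae_linearIndependent (d := d) (k := k) (by omega)] with v hv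
    obtain ⟨N, hN, hNv, hNy⟩ := exists_compl_frame hkn v hv
    rw [← map_frame N hN]
    refine Eq.trans (lintegral_congr_ae ?_)
      (lintegral_map (hH.comp (measurable_euclNorm_sq n)) (measurable_mulVec N)).symm
    filter_upwards [ae_linearIndependent_cons (by omega) v hv] with b hb
    obtain ⟨hy0, hy⟩ := minNormSol_cons b v hb N hNv hNy r hr
    set y := minNormSol (Pi.single 0 r) (Matrix.of (Fin.cons b v : Fin (k + 1) → Fin d → ℝ))
    have hm1 : Measurable (fun C : Fin m → Fin d → ℝ => Matrix.of C *ᵥ y) :=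
      (show Continuous (fun C : Fin m → Fin d → ℝ => Matrix.of C *ᵥ y) from
        Continuous.matrix_mulVec continuous_id continuous_const).measurable
    have hf1 : Measurable (fun x : Fin m → ℝ =>
        f (((n : ℝ) / ((m : ℝ) * r ^ 2)) * euclNorm x ^ 2)) :=
      hf.comp ((measurable_euclNorm_sq m).const_mul _)
    rw [← lintegral_map (f := fun x : Fin m → ℝ =>
        f (((n : ℝ) / ((m : ℝ) * r ^ 2)) * euclNorm x ^ 2)) hf1 hm1, map_mulVec_gaussMat y hy0,
      lintegral_map hf1 (by fun_prop)]
    simp only [hHdef]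
    refine lintegral_congr fun g => ?_
    congr 1
    have : euclNorm (euclNorm y • g) ^ 2 = euclNorm y ^ 2 * euclNorm g ^ 2 := by
      rw [euclNorm_sq, euclNorm_sq g, smul_dotProduct, dotProduct_smul, smul_eq_mul, smul_eq_mul]
      ring
    rw [this, hy]
    simp only [div_eq_mul_inv, mul_inv, inv_inv]
    have : r ^ 2 * (r ^ 2)⁻¹ = 1 := mul_inv_cancel₀ (pow_ne_zero 2 hr)
    linear_combination (n * (m : ℝ)⁻¹ * (euclNorm (N *ᵥ b) ^ 2)⁻¹ * euclNorm g ^ 2) * this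
  refine (lintegral_congr_ae hae).trans ?_
  simp

/-- Some orthogonal matrix rotates `z` onto the first coordinate axis. -/
theorem exists_rotation {k : ℕ} (z : Fin (k + 1) → ℝ) (hz : z ≠ 0) :
    ∃ R : Matrix (Fin (k + 1)) (Fin (k + 1)) ℝ, R * Rᵀ = 1 ∧
      R *ᵥ z = Pi.single 0 (euclNorm z) := by
  let e : EuclideanSpace ℝ (Fin (k + 1)) := WithLp.toLp 2 z
  have he : e ≠ 0 := fun h => hz (by simpa [e] using h)
  have hnorm : euclNorm z = ‖e‖ := by
    rw [EuclideanSpace.norm_eq]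
    simp [euclNorm, e]
  have hne : ‖e‖ ≠ 0 := norm_ne_zero_iff.2 he
  obtain ⟨b, hb⟩ := Orthonormal.exists_orthonormalBasis_extension_of_card_eq (𝕜 := ℝ)
    (ι := Fin (k + 1)) (E := EuclideanSpace ℝ (Fin (k + 1))) (by simp)
    (v := fun _ => (‖e‖⁻¹ : ℝ) • e) (s := {0}) (by
      rw [orthonormal_iff_ite]
      rintro ⟨i, rfl⟩ ⟨j, rfl⟩
      change inner ℝ ((‖e‖⁻¹ : ℝ) • e) ((‖e‖⁻¹ : ℝ) • e) = _
      rw [if_pos rfl, real_inner_smul_left, real_inner_smul_right, real_inner_self_eq_norm_sq]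
      field_simp)
  have hb0 : b 0 = (‖e‖⁻¹ : ℝ) • e := hb 0 rfl
  have hez : e = ‖e‖ • b 0 := by rw [hb0, smul_smul, mul_inv_cancel₀ hne, one_smul]
  refine ⟨fun i => (b i).ofLp, ?_, ?_⟩
  · ext i j
    have := orthonormal_iff_ite.1 b.orthonormal i j
    rw [EuclideanSpace.inner_eq_star_dotProduct, star_trivial, dotProduct_comm] at this
    rw [Matrix.one_apply, ← this]
    rfl
  · ext i
    have h1 : inner ℝ (b i) e = ‖e‖ * (if i = 0 then 1 else 0) := by
      conv_lhs => rw [hez]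
      rw [real_inner_smul_right, orthonormal_iff_ite.1 b.orthonormal]
    rw [EuclideanSpace.inner_eq_star_dotProduct, star_trivial, dotProduct_comm] at h1
    refine Eq.trans h1 ?_
    rw [hnorm, Pi.single_apply]
    simp

/-- Compressions of a Gaussian matrix along two mutually orthogonal frames are independent Gaussian matrices. -/
theorem map_blocks {D d k m : ℕ} (P : Matrix (Fin k) (Fin D) ℝ) (Q : Matrix (Fin m) (Fin D) ℝ)
    (hP : P * Pᵀ = 1) (hQ : Q * Qᵀ = 1) (hPQ : P * Qᵀ = 0) :
    (gaussMat (Fin D) (Fin d)).map (fun A =>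
      (((fun i j => (P * Matrix.of A) i j), (fun i j => (Q * Matrix.of A) i j)) :
        (Fin k → Fin d → ℝ) × (Fin m → Fin d → ℝ))) =
      (gaussMat (Fin k) (Fin d)).prod (gaussMat (Fin m) (Fin d)) := by
  have hQP : Q * Pᵀ = 0 := by
    have := congrArg Matrix.transpose hPQ
    simpa using this
  have hF : Matrix.fromRows P Q * (Matrix.fromRows P Q)ᵀ = 1 := by
    rw [Matrix.transpose_fromRows, Matrix.fromRows_mul_fromCols, hP, hQ, hPQ, hQP,
      Matrix.fromBlocks_one]
  have h := (measurePreserving_sumPiEquivProdPi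
    (fun _ : Fin k ⊕ Fin m => Measure.pi fun _ : Fin d => gaussianReal 0 1)).map_eq
  have h2 := map_mul_gaussMat (κ := Fin d) _ hF
  change (gaussMat (Fin k ⊕ Fin m) (Fin d)).map _ =
    (gaussMat (Fin k) (Fin d)).prod (gaussMat (Fin m) (Fin d)) at h
  rw [← h2, Measure.map_map (by fun_prop) (by
    simp only [Matrix.mul_apply, Matrix.of_apply]
    fun_prop)] at h
  refine Eq.trans ?_ h
  rfl

/-- Rotating the equations `B y = z` does not change the minimum-norm solution. No invertibility
of `B Bᵀ` is needed, since `Matrix.mul_inv_rev` holds for the junk-valued inverse too. -/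
theorem minNormSol_rotate {k d : ℕ} (R : Matrix (Fin k) (Fin k) ℝ) (hR : R * Rᵀ = 1)
    (z : Fin k → ℝ) (B : Matrix (Fin k) (Fin d) ℝ) :
    minNormSol (R *ᵥ z) (R * B) = minNormSol z B := by
  have hR' : Rᵀ * R = 1 := mul_eq_one_comm.1 hR
  have hinv : R⁻¹ = Rᵀ := Matrix.inv_eq_right_inv hR
  have hinvT : Rᵀ⁻¹ = R := Matrix.inv_eq_right_inv hR'
  have h : R * B * (R * B)ᵀ = R * (B * Bᵀ) * Rᵀ := by
    rw [Matrix.transpose_mul]; simp only [Matrix.mul_assoc]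
  rw [minNormSol, minNormSol, h, Matrix.mul_inv_rev, Matrix.mul_inv_rev, hinv, hinvT,
    Matrix.transpose_mul]
  simp only [Matrix.mulVec_mulVec]
  congr 1
  calc Bᵀ * Rᵀ * (R * ((B * Bᵀ)⁻¹ * Rᵀ) * R)
      = Bᵀ * (Rᵀ * R) * (B * Bᵀ)⁻¹ * (Rᵀ * R) := by simp only [Matrix.mul_assoc]
    _ = Bᵀ * (B * Bᵀ)⁻¹ := by rw [hR', Matrix.mul_one, Matrix.mul_one]

/-- The scaled squared norm `(n/(m‖z*‖²))·‖w(A)‖²` follows the `F`-distribution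
with degrees of freedom `(m, n)`, realized as the law of `(‖x‖²/m)/(‖y‖²/n)` for independent
standard Gaussian vectors `x ∈ ℝ^m` and `y ∈ ℝ^n`. -/
theorem stmt11 (D d d_e : ℕ) (h1 : 1 ≤ d_e) (h2 : d_e ≤ d) (h3 : d_e < D)
    (U : Matrix (Fin D) (Fin d_e) ℝ) (V : Matrix (Fin D) (Fin (D - d_e)) ℝ)
    (hU : Uᵀ * U = 1) (hV : Vᵀ * V = 1) (hUV : Uᵀ * V = 0)
    (p xstar : Fin D → ℝ)
    (zstar : Fin d_e → ℝ) (hz : zstar = Uᵀ.mulVec (xstar - p)) (hz0 : zstar ≠ 0)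
    (m n : ℕ) (hm : m = D - d_e) (hn : n = d - d_e + 1)
    (w : (Fin D → Fin d → ℝ) → (Fin (D - d_e) → ℝ))
    (hw : w = fun A => Vᵀ.mulVec ((Matrix.of A).mulVec
      ((Uᵀ * Matrix.of A)ᵀ.mulVec
        (((Uᵀ * Matrix.of A) * (Uᵀ * Matrix.of A)ᵀ)⁻¹.mulVec zstar)))) :
    (gaussMatrix D d).map (fun A =>
        ((n : ℝ) / ((m : ℝ) * euclNorm zstar ^ 2)) * euclNorm (w A) ^ 2) =
      ((stdGauss m).prod (stdGauss n)).map
        (fun xy : (Fin m → ℝ) × (Fin n → ℝ) =>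
          (euclNorm xy.1 ^ 2 / (m : ℝ)) / (euclNorm xy.2 ^ 2 / (n : ℝ))) := by
  subst hw hm hn
  clear hz
  obtain ⟨k, rfl⟩ : ∃ k, d_e = k + 1 := ⟨d_e - 1, by omega⟩
  obtain ⟨R, hR, hRz⟩ := exists_rotation zstar hz0
  have hr : euclNorm zstar ≠ 0 := by
    intro h
    rw [h, Pi.single_zero] at hRz
    have : (Rᵀ * R) *ᵥ zstar = 0 := by rw [← Matrix.mulVec_mulVec, hRz, Matrix.mulVec_zero]
    rw [mul_eq_one_comm.1 hR, Matrix.one_mulVec] at this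
    exact hz0 this
  have hP : (R * Uᵀ) * (R * Uᵀ)ᵀ = 1 := by
    rw [Matrix.transpose_mul, Matrix.transpose_transpose, Matrix.mul_assoc, ← Matrix.mul_assoc Uᵀ,
      hU, Matrix.one_mul, hR]
  have hQ : Vᵀ * Vᵀᵀ = 1 := hV
  have hPQ : (R * Uᵀ) * Vᵀᵀ = 0 := by
    rw [Matrix.transpose_transpose, Matrix.mul_assoc, hUV, Matrix.mul_zero]
  rw [← core_map (k := k) (d := d) (by omega) (by omega) (euclNorm zstar) hr,
    ← map_blocks _ _ hP hQ hPQ, Measure.map_map]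
  · change (gaussMat (Fin D) (Fin d)).map _ = _
    congr 1
    ext A
    have h1 : minNormSol (Pi.single 0 (euclNorm zstar)) (R * Uᵀ * Matrix.of A) =
        minNormSol zstar (Uᵀ * Matrix.of A) := by
      rw [← hRz, Matrix.mul_assoc, minNormSol_rotate R hR]
    change _ = _ * euclNorm ((Vᵀ * Matrix.of A) *ᵥ
      minNormSol (Pi.single 0 (euclNorm zstar)) (R * Uᵀ * Matrix.of A)) ^ 2
    rw [h1, ← Matrix.mulVec_mulVec]
    rfl
  · exact measurable_core _ _
  · simp only [Matrix.mul_apply, Matrix.of_apply]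
    fun_prop
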